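/- arXiv:2310.03641 — 8 statements merged into one kernel-verified Lean document; each statement's English description precedes it below -/
import Mathlib

section
/- Let X and Y be finite nonempty sets, let f : X × Y → ℝ, and let g : X → ℝ and h : Y → ℝ satisfy |g(x)| ≤ 1 and |h(y)| ≤ 1 for all x ∈ X, y ∈ Y. Then (E_{x,y}[f(x,y)·g(x)·h(y)])⁴ ≤ R₂(f), where x and y are independent uniform samples from X and Y respectively. -/
/-!
Write `K y y' = ∑ x, f (x, y) * f (x, y')`. Cauchy–Schwarz in `x`, using `|g| ≤ 1`, bounds the
square of `∑ x, ∑ y, f (x, y) * g x * h y` by `|X| * ∑ x, (∑ y, h y * f (x, y)) ^ 2`, and the last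
sum equals `∑ y, ∑ y', h y * h y' * K y y'`. Cauchy–Schwarz in `(y, y')`, using `|h| ≤ 1`, bounds
the square of that by `|Y| ^ 2 * ∑ y, ∑ y', K y y' ^ 2`, and `∑ y, ∑ y', K y y' ^ 2` is the
numerator of `R2 f`. Both applications are instances of `sq_sum_mul_le_card_mul`.
-/

open Finset

/-- The 2-party norm of `f : X × Y → ℝ`. -/
noncomputable def R2 {X Y : Type*} [Fintype X] [Fintype Y] (f : X × Y → ℝ) : ℝ :=
  (∑ x : X, ∑ x' : X, ∑ y : Y, ∑ y' : Y,
      f (x, y) * f (x, y') * f (x', y) * f (x', y')) /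
    ((Fintype.card X : ℝ) ^ 2 * (Fintype.card Y : ℝ) ^ 2)

/-- Cauchy–Schwarz with bounded weights: this is the step that removes `g` and then `h`. -/
lemma sq_sum_mul_le_card_mul {ι : Type*} [Fintype ι] (u v : ι → ℝ) (hu : ∀ i, |u i| ≤ 1) :
    (∑ i, u i * v i) ^ 2 ≤ (Fintype.card ι : ℝ) * ∑ i, v i ^ 2 := by
  calc (∑ i, u i * v i) ^ 2 ≤ (Fintype.card ι : ℝ) * ∑ i, (u i * v i) ^ 2 :=
        sq_sum_le_card_mul_sum_sq
    _ ≤ (Fintype.card ι : ℝ) * ∑ i, v i ^ 2 := by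
        refine mul_le_mul_of_nonneg_left (Finset.sum_le_sum fun i _ => ?_) (Nat.cast_nonneg _)
        rw [mul_pow]
        exact mul_le_of_le_one_left (sq_nonneg _) ((sq_le_one_iff_abs_le_one _).2 (hu i))

/-- For bounded `g`, `h`, the fourth power of the correlation
`E_{x,y}[f(x,y)·g(x)·h(y)]` is at most `R₂(f)`. -/
theorem stmt_1 {X Y : Type*} [Fintype X] [Fintype Y] [Nonempty X] [Nonempty Y]
    (f : X × Y → ℝ) (g : X → ℝ) (h : Y → ℝ)
    (hg : ∀ x : X, |g x| ≤ 1) (hh : ∀ y : Y, |h y| ≤ 1) :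
    ((∑ x : X, ∑ y : Y, f (x, y) * g x * h y) /
        ((Fintype.card X : ℝ) * (Fintype.card Y : ℝ))) ^ 4 ≤ R2 f := by
  have h1 : (∑ x : X, ∑ y : Y, f (x, y) * g x * h y) ^ 2
      ≤ (Fintype.card X : ℝ) * ∑ x : X, (∑ y : Y, h y * f (x, y)) ^ 2 := by
    convert sq_sum_mul_le_card_mul g (fun x => ∑ y : Y, h y * f (x, y)) hg using 4 with x
    rw [Finset.mul_sum]
    exact Finset.sum_congr rfl fun y _ => by ring
  have h2 : ∑ x : X, (∑ y : Y, h y * f (x, y)) ^ 2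
      = ∑ p : Y × Y, (h p.1 * h p.2) * ∑ x : X, f (x, p.1) * f (x, p.2) := by
    simp_rw [sq, Finset.sum_mul_sum, Finset.mul_sum, ← Fintype.sum_prod_type']
    exact Fintype.sum_equiv (Equiv.prodComm X (Y × Y)) _ _ fun q => by
      simp only [Equiv.prodComm_apply, Prod.fst_swap, Prod.snd_swap]
      ring
  have h3 := sq_sum_mul_le_card_mul (fun p : Y × Y => h p.1 * h p.2)
    (fun p => ∑ x : X, f (x, p.1) * f (x, p.2)) fun p => by
      rw [abs_mul]
      exact mul_le_one₀ (hh p.1) (abs_nonneg _) (hh p.2)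
  have h4 : ∑ p : Y × Y, (∑ x : X, f (x, p.1) * f (x, p.2)) ^ 2
      = ∑ x : X, ∑ x' : X, ∑ y : Y, ∑ y' : Y,
          f (x, y) * f (x, y') * f (x', y) * f (x', y') := by
    simp_rw [sq, Finset.sum_mul_sum, ← Fintype.sum_prod_type']
    exact Fintype.sum_equiv ((Equiv.prodComm (Y × Y) (X × X)).trans (Equiv.prodAssoc X X (Y × Y)))
      _ _ fun q => by
        simp only [Equiv.trans_apply, Equiv.prodComm_apply, Equiv.prodAssoc_apply, Prod.fst_swap,
          Prod.snd_swap]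
        ring
  rw [← h2, h4, Fintype.card_prod, Nat.cast_mul] at h3
  have hX : (0 : ℝ) < Fintype.card X := by exact_mod_cast Fintype.card_pos
  have hY : (0 : ℝ) < Fintype.card Y := by exact_mod_cast Fintype.card_pos
  have h5 := pow_le_pow_left₀ (sq_nonneg _) h1 2
  rw [mul_pow, ← pow_mul] at h5
  have h6 := h5.trans (mul_le_mul_of_nonneg_left h3 (sq_nonneg _))
  rw [R2, div_pow, div_le_div_iff₀ (by positivity) (by positivity)]
  have h7 := mul_le_mul_of_nonneg_right h6
    (by positivity : (0 : ℝ) ≤ (Fintype.card X : ℝ) ^ 2 * (Fintype.card Y : ℝ) ^ 2)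
  refine h7.trans (le_of_eq ?_)
  ring
end

section
/- Let X and Y be finite nonempty sets and let f : X × Y → ℝ. Then for every pair of subsets A ⊆ X and B ⊆ Y, |E_{x,y}[f(x,y)·1_A(x)·1_B(y)]| ≤ R₂(f)^{1/4}, where x and y are independent uniform samples from X and Y, and 1_A, 1_B denote {0,1}-valued indicator functions. -/
/-!
Two applications of the Cauchy–Schwarz inequality. Write `S` for the unnormalised sum of `f` over
`A × B`. Cauchy–Schwarz over `x` gives
`S² ≤ |X| · ∑ y ∈ B, ∑ y' ∈ B, ∑ x, f (x, y) f (x, y')`, because enlarging the range of `x` from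
`A` to `X` only adds squares. Cauchy–Schwarz over the pairs `(y, y')` bounds the square of the
latter sum by `|Y|² · ∑ y, ∑ y', (∑ x, f (x, y) f (x, y'))²`, and the sum appearing there is the
numerator of `R2 f`. Hence `S⁴ ≤ |X|² |Y|²` times that numerator; dividing by `(|X| |Y|)⁴` and
taking fourth roots gives the claim.
-/

open Finset

/-- Expanding the square and exchanging sums identifies the numerator of `R2 f` with the sum of
squared column correlations. -/
lemma sum_sq_corr {X Y : Type*} [Fintype X] [Fintype Y] (f : X × Y → ℝ) :
    ∑ p : Y × Y, (∑ x : X, f (x, p.1) * f (x, p.2)) ^ 2 =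
      ∑ x : X, ∑ x' : X, ∑ y : Y, ∑ y' : Y,
        f (x, y) * f (x, y') * f (x', y) * f (x', y') := by
  have h : ∀ x x' : X, ∑ y : Y, ∑ y' : Y, f (x, y) * f (x, y') * f (x', y) * f (x', y') =
      ∑ p : Y × Y, (f (x, p.1) * f (x, p.2)) * (f (x', p.1) * f (x', p.2)) := by
    intro x x'
    rw [Fintype.sum_prod_type]
    exact sum_congr rfl fun y _ => sum_congr rfl fun y' _ => by ring
  simp_rw [h, sq, sum_mul_sum]
  rw [sum_comm]
  exact sum_congr rfl fun x _ => sum_comm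

/-- The first Cauchy–Schwarz step, eliminating `A`. -/
lemma sq_sum_rect_le {X Y : Type*} [Fintype X] (f : X × Y → ℝ) (A : Finset X) (B : Finset Y) :
    (∑ x ∈ A, ∑ y ∈ B, f (x, y)) ^ 2 ≤
      (Fintype.card X : ℝ) * ∑ p ∈ B ×ˢ B, ∑ x : X, f (x, p.1) * f (x, p.2) := by
  have hT : ∑ p ∈ B ×ˢ B, ∑ x : X, f (x, p.1) * f (x, p.2) = ∑ x : X, (∑ y ∈ B, f (x, y)) ^ 2 := by
    rw [sum_comm]
    refine sum_congr rfl fun x _ => ?_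
    rw [sq, sum_mul_sum, sum_product]
  rw [hT]
  calc (∑ x ∈ A, ∑ y ∈ B, f (x, y)) ^ 2
      ≤ (A.card : ℝ) * ∑ x ∈ A, (∑ y ∈ B, f (x, y)) ^ 2 := sq_sum_le_card_mul_sum_sq
    _ ≤ _ := by
      gcongr
      · exact card_le_univ A
      · exact subset_univ A

/-- The second Cauchy–Schwarz step, eliminating `B`. -/
lemma sq_sum_corr_le {X Y : Type*} [Fintype X] [Fintype Y] (f : X × Y → ℝ) (B : Finset Y) :
    (∑ p ∈ B ×ˢ B, ∑ x : X, f (x, p.1) * f (x, p.2)) ^ 2 ≤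
      (Fintype.card Y : ℝ) ^ 2 * ∑ p : Y × Y, (∑ x : X, f (x, p.1) * f (x, p.2)) ^ 2 := by
  calc (∑ p ∈ B ×ˢ B, ∑ x : X, f (x, p.1) * f (x, p.2)) ^ 2
      ≤ ((B ×ˢ B).card : ℝ) * ∑ p ∈ B ×ˢ B, (∑ x : X, f (x, p.1) * f (x, p.2)) ^ 2 :=
        sq_sum_le_card_mul_sum_sq
    _ ≤ _ := by
      rw [card_product, Nat.cast_mul, ← sq]
      gcongr
      · exact card_le_univ B
      · exact subset_univ _

/-- For every combinatorial rectangle `A × B`, the correlation of `f` with the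
indicator of the rectangle is at most `R₂(f)^{1/4}`. -/
theorem stmt_2 {X Y : Type*} [Fintype X] [Fintype Y] [Nonempty X] [Nonempty Y]
    [DecidableEq X] [DecidableEq Y]
    (f : X × Y → ℝ) (A : Finset X) (B : Finset Y) :
    |(∑ x : X, ∑ y : Y,
        f (x, y) * (if x ∈ A then (1 : ℝ) else 0) * (if y ∈ B then (1 : ℝ) else 0)) /
        ((Fintype.card X : ℝ) * (Fintype.card Y : ℝ))| ≤ R2 f ^ ((1 : ℝ) / 4) := by
  have hS : ∑ x : X, ∑ y : Y,
        f (x, y) * (if x ∈ A then (1 : ℝ) else 0) * (if y ∈ B then (1 : ℝ) else 0) =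
      ∑ x ∈ A, ∑ y ∈ B, f (x, y) := by
    have hx : ∀ x : X, ∑ y : Y,
        f (x, y) * (if x ∈ A then (1 : ℝ) else 0) * (if y ∈ B then (1 : ℝ) else 0) =
        if x ∈ A then ∑ y ∈ B, f (x, y) else 0 := by
      intro x
      split_ifs <;> simp
    simp_rw [hx]
    simp
  rw [hS]
  have h1 := sq_sum_rect_le f A B
  have h2 := sq_sum_corr_le (X := X) f B
  rw [sum_sq_corr] at h2
  unfold R2
  have hn : (0 : ℝ) < Fintype.card X := by exact_mod_cast Fintype.card_pos
  have hm : (0 : ℝ) < Fintype.card Y := by exact_mod_cast Fintype.card_pos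
  generalize (∑ x : X, ∑ x' : X, ∑ y : Y, ∑ y' : Y,
    f (x, y) * f (x, y') * f (x', y) * f (x', y')) = N at h2 ⊢
  generalize (∑ p ∈ B ×ˢ B, ∑ x : X, f (x, p.1) * f (x, p.2)) = T at h1 h2
  generalize (∑ x ∈ A, ∑ y ∈ B, f (x, y)) = S at h1 ⊢
  generalize (Fintype.card X : ℝ) = n at *
  generalize (Fintype.card Y : ℝ) = m at *
  have h4 : S ^ 4 ≤ n ^ 2 * m ^ 2 * N := by
    calc S ^ 4 = (S ^ 2) ^ 2 := by ring
      _ ≤ (n * T) ^ 2 := by gcongr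
      _ = n ^ 2 * T ^ 2 := by ring
      _ ≤ n ^ 2 * (m ^ 2 * N) := by gcongr
      _ = n ^ 2 * m ^ 2 * N := by ring
  have h5 : |S / (n * m)| ^ 4 ≤ N / (n ^ 2 * m ^ 2) := by
    rw [Even.pow_abs (by decide), div_pow, div_le_div_iff₀ (by positivity) (by positivity)]
    calc S ^ 4 * (n ^ 2 * m ^ 2) ≤ n ^ 2 * m ^ 2 * N * (n ^ 2 * m ^ 2) := by gcongr
      _ = N * (n * m) ^ 4 := by ring
  calc |S / (n * m)| = (|S / (n * m)| ^ 4) ^ ((1 : ℝ) / 4) := by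
        rw [← Real.rpow_natCast, ← Real.rpow_mul (abs_nonneg _)]
        norm_num
    _ ≤ _ := Real.rpow_le_rpow (by positivity) h5 (by norm_num)
end

section
/- Let X and Y be finite nonempty sets, let c be a natural number, and let π : X × Y → {-1,1} be a function for which there exists a partition of X × Y into at most 2^c combinatorial rectangles such that π is constant on each rectangle. Then for every f : X × Y → ℝ, |E_{x,y}[f(x,y)·π(x,y)]| ≤ 2^c · R₂(f)^{1/4}, where x and y are independent uniform samples from X and Y. (Since every deterministic 2-party communication protocol of cost c induces such a rectangle partition, this is the correlation bound: the correlation of f with any function having deterministic 2-party communication complexity at most c is at most 2^c · R₂(f)^{1/4}.) -/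
/-! The partition writes `π = ∑ i, s i * 1_{A i} * 1_{B i}` with at most `2 ^ c` terms and
`|s i| ≤ 1`, so by the triangle inequality it suffices to show that the correlation of `f` with a
product `a x * b y` of two functions bounded by one is at most `R2 f ^ (1 / 4)` (`rect_corr_le`).
This is two applications of Cauchy–Schwarz (`rect_sum_pow_four_le`): the first eliminates `a` and
leaves a quadratic form in `b` with matrix `G y y' = ∑ x, f (x, y) * f (x, y')`, the second
eliminates `b` and leaves `∑ y y', G y y' ^ 2`, which is the unnormalised `R2 f`. -/

open Finset

/-- `π : X × Y → ℝ` is constant on each rectangle of some partition of `X × Y`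
into at most `2^c` combinatorial rectangles `A i × B i`. -/
def ConstantOnRectPartition {X Y : Type*} (c : ℕ) (π : X × Y → ℝ) : Prop :=
  ∃ (k : ℕ), k ≤ 2 ^ c ∧
    ∃ (A : Fin k → Set X) (B : Fin k → Set Y),
      (∀ p : X × Y, ∃! i : Fin k, p.1 ∈ A i ∧ p.2 ∈ B i) ∧
      (∀ i : Fin k, ∀ p q : X × Y,
        p.1 ∈ A i → p.2 ∈ B i → q.1 ∈ A i → q.2 ∈ B i → π p = π q)

/-- The bilinear form of `f` at two functions bounded by one, before normalisation: Cauchy–Schwarz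
in `x`, then in the pair `(y, y')`. -/
lemma rect_sum_pow_four_le {X Y : Type*} [Fintype X] [Fintype Y] (f : X × Y → ℝ)
    (a : X → ℝ) (b : Y → ℝ) (ha : ∀ x, a x ^ 2 ≤ 1) (hb : ∀ y, b y ^ 2 ≤ 1) :
    (∑ x, ∑ y, f (x, y) * (a x * b y)) ^ 4 ≤
      (Fintype.card X : ℝ) ^ 2 * (Fintype.card Y : ℝ) ^ 2 *
        ∑ x : X, ∑ x' : X, ∑ y : Y, ∑ y' : Y,
          f (x, y) * f (x, y') * f (x', y) * f (x', y') := by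
  set G : Y × Y → ℝ := fun q => ∑ x, f (x, q.1) * f (x, q.2) with hG
  set Q : ℝ := ∑ x, (∑ y, f (x, y) * b y) ^ 2 with hQ
  have hQ0 : 0 ≤ Q := sum_nonneg fun _ _ => sq_nonneg _
  have h1 : (∑ x, ∑ y, f (x, y) * (a x * b y)) ^ 2 ≤ Fintype.card X * Q := by
    have e : ∑ x, ∑ y, f (x, y) * (a x * b y) = ∑ x, a x * ∑ y, f (x, y) * b y := by
      simp only [mul_sum]
      exact sum_congr rfl fun x _ => sum_congr rfl fun y _ => by ring
    rw [e]
    refine (sum_mul_sq_le_sq_mul_sq _ _ _).trans ?_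
    refine mul_le_mul_of_nonneg_right ?_ hQ0
    simpa using sum_le_sum fun x (_ : x ∈ (univ : Finset X)) => ha x
  have h2 : Q = ∑ q : Y × Y, (b q.1 * b q.2) * G q := by
    simp only [hQ, hG, sq, sum_mul_sum]
    simp only [mul_sum, Fintype.sum_prod_type]
    rw [sum_comm]
    refine sum_congr rfl fun y _ => ?_
    rw [sum_comm]
    exact sum_congr rfl fun y' _ => sum_congr rfl fun x _ => by ring
  have h3 : ∑ q : Y × Y, G q ^ 2 = ∑ x : X, ∑ x' : X, ∑ y : Y, ∑ y' : Y,
      f (x, y) * f (x, y') * f (x', y) * f (x', y') := by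
    simp only [hG, sq, sum_mul_sum]
    rw [sum_comm]
    refine sum_congr rfl fun x _ => ?_
    rw [sum_comm]
    refine sum_congr rfl fun x' _ => ?_
    rw [Fintype.sum_prod_type]
    exact sum_congr rfl fun y _ => sum_congr rfl fun y' _ => by ring
  have h4 : Q ^ 2 ≤ (Fintype.card Y : ℝ) ^ 2 * ∑ q : Y × Y, G q ^ 2 := by
    rw [h2]
    refine (sum_mul_sq_le_sq_mul_sq _ _ _).trans ?_
    refine mul_le_mul_of_nonneg_right ?_ (sum_nonneg fun _ _ => sq_nonneg _)
    have hq : ∀ q ∈ (univ : Finset (Y × Y)), (b q.1 * b q.2) ^ 2 ≤ 1 := fun q _ => by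
      rw [mul_pow]; exact mul_le_one₀ (hb _) (sq_nonneg _) (hb _)
    simpa [sq] using sum_le_sum hq
  rw [← h3]
  calc _ = ((∑ x, ∑ y, f (x, y) * (a x * b y)) ^ 2) ^ 2 := by ring
    _ ≤ (Fintype.card X * Q) ^ 2 := by gcongr
    _ = (Fintype.card X : ℝ) ^ 2 * Q ^ 2 := by ring
    _ ≤ (Fintype.card X : ℝ) ^ 2 * ((Fintype.card Y : ℝ) ^ 2 * ∑ q : Y × Y, G q ^ 2) := by gcongr
    _ = _ := by ring

lemma rect_corr_le {X Y : Type*} [Fintype X] [Fintype Y] [Nonempty X] [Nonempty Y]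
    (f : X × Y → ℝ) (a : X → ℝ) (b : Y → ℝ) (ha : ∀ x, a x ^ 2 ≤ 1) (hb : ∀ y, b y ^ 2 ≤ 1) :
    |(∑ x, ∑ y, f (x, y) * (a x * b y)) / ((Fintype.card X : ℝ) * (Fintype.card Y : ℝ))| ≤
      R2 f ^ ((1 : ℝ) / 4) := by
  have hX : (0 : ℝ) < Fintype.card X := by exact_mod_cast Fintype.card_pos
  have hY : (0 : ℝ) < Fintype.card Y := by exact_mod_cast Fintype.card_pos
  have h := rect_sum_pow_four_le f a b ha hb
  set S := ∑ x, ∑ y, f (x, y) * (a x * b y)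
  have h4 : |S / ((Fintype.card X : ℝ) * (Fintype.card Y : ℝ))| ^ 4 ≤ R2 f := by
    rw [Even.pow_abs (by decide), div_pow, R2, div_le_div_iff₀ (by positivity) (by positivity)]
    calc _ ≤ _ := mul_le_mul_of_nonneg_right h (by positivity)
      _ = _ := by ring
  calc _ = (|S / ((Fintype.card X : ℝ) * (Fintype.card Y : ℝ))| ^ 4) ^ ((1 : ℝ) / 4) := by
        rw [one_div]
        exact (Real.pow_rpow_inv_natCast (n := 4) (abs_nonneg _) (by decide)).symm
    _ ≤ _ := Real.rpow_le_rpow (by positivity) h4 (by norm_num)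

/-- The correlation bound: if `π` is a `±1`-valued function that is constant on each
rectangle of a partition of `X × Y` into at most `2^c` combinatorial rectangles
(as is every function of deterministic 2-party communication complexity at most `c`),
then its correlation with any `f` is at most `2^c · R₂(f)^{1/4}`. -/
theorem stmt_3 {X Y : Type*} [Fintype X] [Fintype Y] [Nonempty X] [Nonempty Y]
    (c : ℕ) (π : X × Y → ℝ) (hπ : ∀ p : X × Y, π p = 1 ∨ π p = -1)
    (hrect : ConstantOnRectPartition c π) (f : X × Y → ℝ) :
    |(∑ x : X, ∑ y : Y, f (x, y) * π (x, y)) /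
        ((Fintype.card X : ℝ) * (Fintype.card Y : ℝ))| ≤
      2 ^ c * R2 f ^ ((1 : ℝ) / 4) := by
  classical
  obtain ⟨k, hk, A, B, hpart, hconst⟩ := hrect
  -- `s i` is the value of `π` on the `i`-th rectangle, and `0` if that rectangle is empty.
  have hs : ∀ i, ∃ s : ℝ, s ^ 2 ≤ 1 ∧ ∀ p : X × Y, p.1 ∈ A i → p.2 ∈ B i → π p = s := by
    intro i
    by_cases h : ∃ p : X × Y, p.1 ∈ A i ∧ p.2 ∈ B i
    · obtain ⟨p, hpA, hpB⟩ := h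
      refine ⟨π p, ?_, fun q hqA hqB => hconst i q p hqA hqB hpA hpB⟩
      rcases hπ p with h | h <;> simp [h]
    · exact ⟨0, by norm_num, fun p hA hB => (h ⟨p, hA, hB⟩).elim⟩
  choose s hs1 hs2 using hs
  set a : Fin k → X → ℝ := fun i x => if x ∈ A i then s i else 0 with ha
  set b : Fin k → Y → ℝ := fun i y => if y ∈ B i then 1 else 0 with hb
  have hsum : ∀ x y, π (x, y) = ∑ i, a i x * b i y := by
    intro x y
    obtain ⟨i, ⟨hA, hB⟩, hu⟩ := hpart (x, y)
    rw [sum_eq_single i]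
    · simpa [ha, hb, show x ∈ A i from hA, show y ∈ B i from hB] using hs2 i (x, y) hA hB
    · intro j _ hj
      by_cases hjA : x ∈ A j
      · have hjB : y ∉ B j := fun hjB => hj (hu j ⟨hjA, hjB⟩)
        simp [hb, hjB]
      · simp [ha, hjA]
    · simp
  have hexp : ∑ x, ∑ y, f (x, y) * π (x, y) =
      ∑ i, ∑ x, ∑ y, f (x, y) * (a i x * b i y) := by
    simp only [hsum, mul_sum]
    rw [sum_comm]
    conv_rhs => rw [sum_comm]
    rw [sum_comm]
    exact sum_congr rfl fun x _ => sum_comm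
  have hle : ∀ i, |(∑ x, ∑ y, f (x, y) * (a i x * b i y)) /
      ((Fintype.card X : ℝ) * (Fintype.card Y : ℝ))| ≤ R2 f ^ ((1 : ℝ) / 4) := by
    intro i
    refine rect_corr_le f (a i) (b i) (fun x => ?_) (fun y => ?_)
    · by_cases h : x ∈ A i <;> simp only [ha, h, if_true, if_false]
      · exact hs1 i
      · norm_num
    · by_cases h : y ∈ B i <;> simp [hb, h]
  -- Nonnegativity of `R2 f ^ (1 / 4)` comes from the zero rectangle.
  have hR : 0 ≤ R2 f ^ ((1 : ℝ) / 4) :=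
    (abs_nonneg _).trans (rect_corr_le f 0 0 (by simp) (by simp))
  rw [hexp, sum_div]
  calc _ ≤ ∑ i : Fin k, R2 f ^ ((1 : ℝ) / 4) :=
        (abs_sum_le_sum_abs _ _).trans (sum_le_sum fun i _ => hle i)
    _ = k * R2 f ^ ((1 : ℝ) / 4) := by simp
    _ ≤ _ := mul_le_mul_of_nonneg_right (by exact_mod_cast hk) hR
end

section
/- Let X and Y be finite nonempty sets, let f be drawn uniformly at random from the set of all functions X × Y → {-1,1}, and let t > 0. Then Pr_f[R₂(f) > t] ≤ (1/|X| + 1/|Y|)/t. -/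
/-!
The bound is Markov's inequality applied to `R2`, which is nonnegative because it is a sum of squares
of the row inner products `∑ y, f (x, y) * f (x', y)`. The mean of `R2` is computed term by term:
the product of the four signs at `(x, y), (x, y'), (x', y), (x', y')` has mean zero when `x ≠ x'` and
`y ≠ y'`, since flipping the sign at `(x, y)` negates it, and is at most `1` otherwise. Hence its
mean is at most `[x = x'] + [y = y']`, and averaging over `x, x', y, y'` gives `1/|X| + 1/|Y|`.
-/

open Finset
open scoped Classical

/-- The `±1` value associated with a boolean. -/
def sgn (b : Bool) : ℝ := if b then 1 else -1

lemma R2_nonneg {X Y : Type*} [Fintype X] [Fintype Y] (f : X × Y → ℝ) : 0 ≤ R2 f := by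
  unfold R2
  refine div_nonneg (Finset.sum_nonneg fun x _ => Finset.sum_nonneg fun x' _ => ?_) (by positivity)
  have h : (∑ y : Y, ∑ y' : Y, f (x, y) * f (x, y') * f (x', y) * f (x', y')) =
      (∑ y : Y, f (x, y) * f (x', y)) ^ 2 := by
    rw [sq, Finset.sum_mul_sum]
    exact Finset.sum_congr rfl fun y _ => Finset.sum_congr rfl fun y' _ => by ring
  rw [h]
  positivity

lemma sgn_not (b : Bool) : sgn (!b) = -sgn b := by
  cases b <;> simp [sgn]

lemma abs_sgn (b : Bool) : |sgn b| = 1 := by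
  cases b <;> simp [sgn]

/-- Summed over all sign patterns, the product over the corners of a rectangle vanishes unless the
rectangle is degenerate. -/
lemma sum_corners_le {X Y : Type*} [Fintype X] [Fintype Y] [DecidableEq X] [DecidableEq Y]
    (x x' : X) (y y' : Y) :
    ∑ g : X × Y → Bool, sgn (g (x, y)) * sgn (g (x, y')) * sgn (g (x', y)) * sgn (g (x', y')) ≤
      (Fintype.card (X × Y → Bool) : ℝ) *
        ((if x = x' then 1 else 0) + (if y = y' then 1 else 0)) := by
  by_cases h : x = x' ∨ y = y'
  · have h1 : (1 : ℝ) ≤ (if x = x' then 1 else 0) + (if y = y' then 1 else 0) := by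
      split_ifs <;> simp_all
    calc _ ≤ ∑ g : X × Y → Bool, (1 : ℝ) := Finset.sum_le_sum fun g _ =>
            (le_abs_self _).trans (by simp [abs_mul, abs_sgn])
      _ = (Fintype.card (X × Y → Bool) : ℝ) * 1 := by simp
      _ ≤ _ := by gcongr
  · push Not at h
    obtain ⟨hx, hy⟩ := h
    simp only [hx, hy, if_false, add_zero, mul_zero]
    refine le_of_eq (Finset.sum_involution
      (fun g _ => Function.update g (x, y) (!g (x, y))) ?_ ?_ ?_ ?_)
    · intro g _
      simp [Ne.symm hx, Ne.symm hy, sgn_not]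
    · intro g _ _ he
      simpa using congrFun he (x, y)
    · intro g _
      exact Finset.mem_univ _
    · intro g _
      simp

/-- The mean of `R2` over all sign patterns is at most `1/|X| + 1/|Y|`. -/
lemma sum_R2_le {X Y : Type*} [Fintype X] [Fintype Y] [Nonempty X] [Nonempty Y]
    [DecidableEq X] [DecidableEq Y] :
    ∑ g : X × Y → Bool, R2 (fun p => sgn (g p)) ≤
      (Fintype.card (X × Y → Bool) : ℝ) *
        (1 / (Fintype.card X : ℝ) + 1 / (Fintype.card Y : ℝ)) := by
  have hX : (0 : ℝ) < Fintype.card X := by exact_mod_cast Fintype.card_pos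
  have hY : (0 : ℝ) < Fintype.card Y := by exact_mod_cast Fintype.card_pos
  unfold R2
  rw [← Finset.sum_div, div_le_iff₀ (by positivity)]
  calc _ = ∑ x : X, ∑ x' : X, ∑ y : Y, ∑ y' : Y, ∑ g : X × Y → Bool,
          sgn (g (x, y)) * sgn (g (x, y')) * sgn (g (x', y)) * sgn (g (x', y')) := by
        rw [Finset.sum_comm]; refine Finset.sum_congr rfl fun x _ => ?_
        rw [Finset.sum_comm]; refine Finset.sum_congr rfl fun x' _ => ?_
        rw [Finset.sum_comm]; refine Finset.sum_congr rfl fun y _ => ?_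
        rw [Finset.sum_comm]
    _ ≤ ∑ x : X, ∑ x' : X, ∑ y : Y, ∑ y' : Y, (Fintype.card (X × Y → Bool) : ℝ) *
          ((if x = x' then 1 else 0) + (if y = y' then 1 else 0)) := by
        refine Finset.sum_le_sum fun x _ => Finset.sum_le_sum fun x' _ =>
          Finset.sum_le_sum fun y _ => Finset.sum_le_sum fun y' _ => sum_corners_le x x' y y'
    _ = (Fintype.card (X × Y → Bool) : ℝ) * ((Fintype.card X : ℝ) * (Fintype.card Y : ℝ) ^ 2 +
          (Fintype.card X : ℝ) ^ 2 * (Fintype.card Y : ℝ)) := by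
        simp only [← Finset.mul_sum, Finset.sum_add_distrib, Finset.sum_const, Finset.card_univ,
          nsmul_eq_mul, Finset.sum_ite_eq, Finset.mem_univ, if_true]
        ring
    _ = _ := by field_simp

/-- Markov bound for the 2-party norm of a uniformly random `±1`-valued function:
`Pr_f[R₂(f) > t] ≤ (1/|X| + 1/|Y|)/t`. -/
theorem stmt_7 {X Y : Type*} [Fintype X] [Fintype Y] [Nonempty X] [Nonempty Y]
    [DecidableEq X] [DecidableEq Y] (t : ℝ) (ht : 0 < t) :
    ((Finset.univ.filter fun g : X × Y → Bool => t < R2 (fun p => sgn (g p))).card : ℝ) /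
      (Fintype.card (X × Y → Bool) : ℝ) ≤
    (1 / (Fintype.card X : ℝ) + 1 / (Fintype.card Y : ℝ)) / t := by
  have hN : (0 : ℝ) < Fintype.card (X × Y → Bool) := by exact_mod_cast Fintype.card_pos
  rw [div_le_div_iff₀ hN ht, mul_comm (_ + _)]
  refine le_trans ?_ sum_R2_le
  rw [← nsmul_eq_mul, ← Finset.sum_const]
  calc _ ≤ ∑ g ∈ Finset.univ.filter fun g : X × Y → Bool => t < R2 (fun p => sgn (g p)),
          R2 (fun p => sgn (g p)) :=
        Finset.sum_le_sum fun g hg => (Finset.mem_filter.mp hg).2.le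
    _ ≤ _ := Finset.sum_le_sum_of_subset_of_nonneg (Finset.filter_subset _ _)
        fun g _ _ => R2_nonneg _
end

section
/- There exists a constant k > 0 such that for every n ≥ 2 and every linear threshold function f : {0,1}^{⌈n/2⌉} × {0,1}^{⌊n/2⌋} → {-1,1} on the n combined input bits, R₂(f) ≥ n^{-k}. -/
/-!
Writing `h x = w · x` and `g y = θ - v · y`, a linear threshold function is a comparison function:
it equals `1` exactly when `g y ≤ h x`. Every comparison function has 2-party norm at least the
absolute constant `1 / 20`, whatever the distributions of `g` and `h`, which gives `k = 5`.

The 2-party norm is the average over `y, y'` of `M(y, y')²`, where `M(y, y') = E_x f(x,y) f(x,y')`.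
Since the sets `{x | h x < g y}` form a chain, `M(y, y') = 1 - 2 |U y - U y'|`, where `U y ∈ [0, 1]`
is the density of `{x | h x < g y}`. Sort the points `y` into five cells by `⌊4 U y⌋`. Two points
of one cell have `|U y - U y'| ≤ 1/4`, hence `M(y, y')² ≥ 1/4`, and by Cauchy–Schwarz at least a fifth
of all pairs `(y, y')` share a cell.
-/

open Finset

/-- The `0/1` real value of a boolean input bit. -/
def b2r (b : Bool) : ℝ := if b then 1 else 0

/-- The `±1`-valued linear threshold function on `{0,1}^{⌈n/2⌉} × {0,1}^{⌊n/2⌋}`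
with weights `w, v` (on the two halves of the combined input) and threshold `θ`. -/
noncomputable def ltf (n : ℕ) (w : Fin ((n + 1) / 2) → ℝ) (v : Fin (n / 2) → ℝ) (θ : ℝ)
    (p : (Fin ((n + 1) / 2) → Bool) × (Fin (n / 2) → Bool)) : ℝ :=
  if θ ≤ (∑ i, w i * b2r (p.1 i)) + ∑ j, v j * b2r (p.2 j) then 1 else -1

/-- The `±1`-valued comparison function of `h` and `g`. -/
noncomputable def cmpFun {X Y : Type*} (h : X → ℝ) (g : Y → ℝ) (p : X × Y) : ℝ :=
  if g p.2 ≤ h p.1 then 1 else -1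

/-- The number of `x` for which the comparison with `y` comes out `-1`. -/
noncomputable def numBelow {X Y : Type*} [Fintype X] (h : X → ℝ) (g : Y → ℝ) (y : Y) : ℕ :=
  #{x | h x < g y}

theorem sum_four_eq_sum_sq {X Y : Type*} [Fintype X] [Fintype Y] (f : X × Y → ℝ) :
    (∑ x : X, ∑ x' : X, ∑ y : Y, ∑ y' : Y, f (x, y) * f (x, y') * f (x', y) * f (x', y')) =
      ∑ y : Y, ∑ y' : Y, (∑ x : X, f (x, y) * f (x, y')) ^ 2 := by
  calc _ = ∑ x : X, ∑ y : Y, ∑ y' : Y, ∑ x' : X,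
        f (x, y) * f (x, y') * f (x', y) * f (x', y') := by
        refine sum_congr rfl fun x _ => ?_
        rw [sum_comm]
        exact sum_congr rfl fun y _ => sum_comm
    _ = ∑ y : Y, ∑ y' : Y, ∑ x : X, ∑ x' : X,
        f (x, y) * f (x, y') * f (x', y) * f (x', y') := by
        rw [sum_comm]
        exact sum_congr rfl fun y _ => sum_comm
    _ = _ := by
        refine sum_congr rfl fun y _ => sum_congr rfl fun y' _ => ?_
        rw [sq, sum_mul_sum]
        exact sum_congr rfl fun x _ => sum_congr rfl fun x' _ => by ring

theorem sum_cmpFun_mul {X Y : Type*} [Fintype X] (h : X → ℝ) (g : Y → ℝ) {y y' : Y}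
    (hy : g y ≤ g y') :
    ∑ x, cmpFun h g (x, y) * cmpFun h g (x, y') =
      Fintype.card X - 2 * ((numBelow h g y' : ℝ) - numBelow h g y) := by
  have key : ∀ x, cmpFun h g (x, y) * cmpFun h g (x, y') =
      1 - 2 * ((if h x < g y' then (1 : ℝ) else 0) - if h x < g y then 1 else 0) := by
    intro x
    simp only [cmpFun]
    split_ifs <;> first | (exfalso; linarith) | norm_num
  simp only [key, sum_sub_distrib, ← mul_sum, sum_boole, numBelow]
  simp

/-- Points `y, y'` of one cell are positively correlated. -/
theorem le_sum_cmpFun_mul {X Y : Type*} [Fintype X] [Nonempty X] (h : X → ℝ) (g : Y → ℝ)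
    {y y' : Y}
    (hc : 4 * numBelow h g y / Fintype.card X = 4 * numBelow h g y' / Fintype.card X) :
    (Fintype.card X : ℝ) / 2 ≤ ∑ x, cmpFun h g (x, y) * cmpFun h g (x, y') := by
  wlog hy : g y ≤ g y' generalizing y y'
  · simpa only [mul_comm] using this hc.symm (le_of_not_ge hy)
  rw [sum_cmpFun_mul h g hy]
  have hN : 0 < Fintype.card X := Fintype.card_pos
  have h1 := Nat.div_mul_le_self (4 * numBelow h g y) (Fintype.card X)
  have h2 := Nat.lt_div_mul_add (a := 4 * numBelow h g y') hN
  rw [← hc] at h2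
  have h3 : 4 * numBelow h g y' ≤ 4 * numBelow h g y + Fintype.card X := by omega
  have h4 : (4 * numBelow h g y' : ℝ) ≤ 4 * numBelow h g y + Fintype.card X := by exact_mod_cast h3
  linarith

/-- A map to five cells sends at least a fifth of all pairs into a common cell. -/
theorem card_sq_le_collisions {Y : Type*} [Fintype Y] (c : Y → ℕ) (hc : ∀ y, c y < 5) :
    (Fintype.card Y : ℝ) ^ 2 ≤ 5 * ∑ y, ∑ y', if c y = c y' then (1 : ℝ) else 0 := by
  have h1 : ∑ y, ∑ y', (if c y = c y' then (1 : ℝ) else 0) =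
      ∑ j ∈ range 5, (∑ y, if c y = j then (1 : ℝ) else 0) ^ 2 := by
    simp only [sq, sum_mul_sum]
    rw [sum_comm]
    simp only [sum_comm (s := range 5)]
    rw [sum_comm]
    refine sum_congr rfl fun y _ => sum_congr rfl fun y' _ => ?_
    simp [hc, eq_comm]
  have h2 : ∑ j ∈ range 5, (∑ y, if c y = j then (1 : ℝ) else 0) = Fintype.card Y := by
    rw [sum_comm]
    simp [hc]
  rw [h1, ← h2]
  simpa using sq_sum_le_card_mul_sum_sq (s := range 5)
    (f := fun j => ∑ y, if c y = j then (1 : ℝ) else 0)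

theorem R2_cmpFun_ge {X Y : Type*} [Fintype X] [Fintype Y] [Nonempty X] [Nonempty Y]
    (h : X → ℝ) (g : Y → ℝ) : 1 / 20 ≤ R2 (cmpFun h g) := by
  have hX : (0 : ℝ) < Fintype.card X := by exact_mod_cast Fintype.card_pos
  have hY : (0 : ℝ) < Fintype.card Y := by exact_mod_cast Fintype.card_pos
  rw [R2, sum_four_eq_sum_sq, le_div_iff₀ (by positivity)]
  let c : Y → ℕ := fun y => 4 * numBelow h g y / Fintype.card X
  -- The value `4` occurs when `h x < g y` for all `x`, hence five cells rather than four.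
  have hc : ∀ y, c y < 5 := fun y => by
    have h1 : numBelow h g y ≤ Fintype.card X := card_le_univ _
    have hN : 0 < Fintype.card X := Fintype.card_pos
    exact (Nat.div_lt_iff_lt_mul hN).2 (by omega)
  have hcol := card_sq_le_collisions c hc
  have hM : ((Fintype.card X : ℝ) / 2) ^ 2 * ∑ y, ∑ y', (if c y = c y' then (1 : ℝ) else 0) ≤
      ∑ y, ∑ y', (∑ x, cmpFun h g (x, y) * cmpFun h g (x, y')) ^ 2 := by
    simp only [mul_sum]
    refine sum_le_sum fun y _ => sum_le_sum fun y' _ => ?_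
    split_ifs with hyy
    · rw [mul_one]
      exact pow_le_pow_left₀ (by positivity) (le_sum_cmpFun_mul h g hyy) 2
    · rw [mul_zero]
      positivity
  have := mul_le_mul_of_nonneg_left hcol (sq_nonneg (Fintype.card X : ℝ))
  linarith

/-- Every linear threshold function on the `n` combined input bits has 2-party norm
at least `n^{-k}` for some universal constant `k > 0`. -/
theorem stmt_9 :
    ∃ k : ℝ, 0 < k ∧
      ∀ n : ℕ, 2 ≤ n →
        ∀ (w : Fin ((n + 1) / 2) → ℝ) (v : Fin (n / 2) → ℝ) (θ : ℝ),
          (n : ℝ) ^ (-k) ≤ R2 (ltf n w v θ) := by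
  refine ⟨5, by norm_num, fun n hn w v θ => ?_⟩
  have hltf : ltf n w v θ =
      cmpFun (fun x => ∑ i, w i * b2r (x i)) (fun y => θ - ∑ j, v j * b2r (y j)) := by
    funext p
    simp only [ltf, cmpFun, sub_le_iff_le_add]
  rw [hltf]
  refine le_trans ?_ (R2_cmpFun_ge _ _)
  have hn' : (2 : ℝ) ≤ n := by exact_mod_cast hn
  calc (n : ℝ) ^ (-5 : ℝ) ≤ (2 : ℝ) ^ (-5 : ℝ) :=
        Real.rpow_le_rpow_of_nonpos (by norm_num) hn' (by norm_num)
    _ = 1 / 32 := by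
        rw [Real.rpow_neg (by norm_num)]
        norm_num
    _ ≤ 1 / 20 := by norm_num
end

section
/- There exists a constant k > 0 such that for every n ≥ 2, every s ≥ 1, and every function f : {0,1}^{⌈n/2⌉} × {0,1}^{⌊n/2⌋} → {-1,1} that is computed by a majority vote of s linear threshold functions on the n combined input bits, R₂(f) ≥ (n·s)^{-k}. -/
/-!
The argument rests on two facts about `±1` matrices `f` on `X × Y`. Let
`S = ∑ f(x,y) f(x,y') f(x',y) f(x',y')`, so that `R₂(f) = S / (|X||Y|)²`.

* Two applications of Cauchy–Schwarz give `|∑ f(x,y) p(x) q(y)| ≤ S^{1/4} ‖p‖₂ ‖q‖₂`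
  (`bilin_pow_four_le`, `bilin_le`). Summing this over colour classes shows that `f` correlates at
  most `S^{1/4} √(|X||Y|)` with any `0/1` matrix of the form `p(x) q(y) [u(x) = v(y)]`
  (`block_le`).
* A linear threshold function depends only on the comparison of two integer ranks below `2^n`
  (`rank_lt_iff`). Comparing by the most significant differing bit writes such a "greater than"
  matrix as a sum of `n` matrices of the above form, so `f` correlates with it at most
  `n S^{1/4} √(|X||Y|)` (`greater_than_le`).

If `f` is the majority vote of `T₁, …, T_s`, then `f · (∑ Tᵢ - 1/2) ≥ 1/2` everywhere (the shift by
`1/2` accounts for ties, which are resolved to `-1`). Summing over all inputs,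
`|X||Y| / 2 ≤ (s (2n + 1) + 1/2) S^{1/4} √(|X||Y|)`, that is `R₂(f) ≥ (6 n s)^{-4}`. Since
`n s ≥ 2`, this is at least `(n s)^{-16}`.
-/

open Finset
open scoped Classical

/-- The `±1`-valued majority vote of `s` linear threshold functions on
`{0,1}^{⌈n/2⌉} × {0,1}^{⌊n/2⌋}`, where the `i`-th threshold function has weights
`w i, v i` (on the two halves of the combined input) and threshold `θ i`:
the output is `1` iff more than `s/2` of the threshold functions output `1`. -/
noncomputable def majThr (n s : ℕ)
    (w : Fin s → Fin ((n + 1) / 2) → ℝ) (v : Fin s → Fin (n / 2) → ℝ) (θ : Fin s → ℝ)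
    (p : (Fin ((n + 1) / 2) → Bool) × (Fin (n / 2) → Bool)) : ℝ :=
  if s < 2 * (Finset.univ.filter fun i : Fin s =>
      θ i ≤ (∑ j, w i j * b2r (p.1 j)) + ∑ j, v i j * b2r (p.2 j)).card
    then 1 else -1

/-- The unnormalised form of `R2`. -/
noncomputable def boxSum {X Y : Type*} [Fintype X] [Fintype Y] (f : X × Y → ℝ) : ℝ :=
  ∑ x : X, ∑ x' : X, ∑ y : Y, ∑ y' : Y, f (x, y) * f (x, y') * f (x', y) * f (x', y')

section

variable {X Y : Type*} [Fintype X] [Fintype Y]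

lemma boxSum_eq_sum_sq (f : X × Y → ℝ) :
    boxSum f = ∑ z : Y × Y, (∑ x, f (x, z.1) * f (x, z.2)) ^ 2 := by
  have h : ∀ z : Y × Y, (∑ x, f (x, z.1) * f (x, z.2)) ^ 2
      = ∑ x, ∑ x', f (x, z.1) * f (x, z.2) * f (x', z.1) * f (x', z.2) := by
    intro z
    rw [sq, sum_mul_sum]
    simp only [mul_assoc]
  simp only [h, Fintype.sum_prod_type, boxSum]
  calc _ = ∑ x : X, ∑ y : Y, ∑ x' : X, ∑ y' : Y,
        f (x, y) * f (x, y') * f (x', y) * f (x', y') :=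
        sum_congr rfl fun x _ => sum_comm
    _ = ∑ y : Y, ∑ x : X, ∑ x' : X, ∑ y' : Y,
        f (x, y) * f (x, y') * f (x', y) * f (x', y') := sum_comm
    _ = ∑ y : Y, ∑ x : X, ∑ y' : Y, ∑ x' : X,
        f (x, y) * f (x, y') * f (x', y) * f (x', y') :=
        sum_congr rfl fun y _ => sum_congr rfl fun x _ => sum_comm
    _ = _ := sum_congr rfl fun y _ => sum_comm

lemma boxSum_nonneg (f : X × Y → ℝ) : 0 ≤ boxSum f := by
  rw [boxSum_eq_sum_sq]
  exact sum_nonneg fun z _ => sq_nonneg _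

/-- The operator norm of the matrix `f` is at most its Schatten `4`-norm. -/
lemma bilin_pow_four_le (f : X × Y → ℝ) (p : X → ℝ) (q : Y → ℝ) :
    (∑ x, ∑ y, f (x, y) * (p x * q y)) ^ 4
      ≤ boxSum f * ((∑ x, p x ^ 2) * (∑ y, q y ^ 2)) ^ 2 := by
  set A := ∑ x, (∑ y, f (x, y) * q y) ^ 2 with hA
  have hA0 : 0 ≤ A := sum_nonneg fun x _ => sq_nonneg _
  have h1 : (∑ x, ∑ y, f (x, y) * (p x * q y)) ^ 2 ≤ (∑ x, p x ^ 2) * A := by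
    have := sum_mul_sq_le_sq_mul_sq univ p (fun x => ∑ y, f (x, y) * q y)
    refine le_of_eq_of_le (congrArg (· ^ 2) (sum_congr rfl fun x _ => ?_)) this
    rw [mul_sum]
    exact sum_congr rfl fun y _ => by ring
  have hA2 : A = ∑ z : Y × Y, (q z.1 * q z.2) * ∑ x, f (x, z.1) * f (x, z.2) := by
    have h : ∀ x, (∑ y, f (x, y) * q y) ^ 2
        = ∑ z : Y × Y, (q z.1 * q z.2) * (f (x, z.1) * f (x, z.2)) := by
      intro x
      rw [sq, sum_mul_sum, Fintype.sum_prod_type]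
      exact sum_congr rfl fun y _ => sum_congr rfl fun y' _ => by ring
    rw [hA, sum_congr rfl fun x _ => h x, sum_comm]
    exact sum_congr rfl fun z _ => by rw [mul_sum]
  have hq : ∑ z : Y × Y, (q z.1 * q z.2) ^ 2 = (∑ y, q y ^ 2) ^ 2 := by
    rw [sq (∑ y, q y ^ 2), sum_mul_sum, Fintype.sum_prod_type]
    exact sum_congr rfl fun y _ => sum_congr rfl fun y' _ => by ring
  have h2 : A ^ 2 ≤ (∑ y, q y ^ 2) ^ 2 * boxSum f := by
    rw [boxSum_eq_sum_sq, ← hq, hA2]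
    exact sum_mul_sq_le_sq_mul_sq univ _ _
  calc (∑ x, ∑ y, f (x, y) * (p x * q y)) ^ 4
      = ((∑ x, ∑ y, f (x, y) * (p x * q y)) ^ 2) ^ 2 := by ring
    _ ≤ ((∑ x, p x ^ 2) * A) ^ 2 := by gcongr
    _ = (∑ x, p x ^ 2) ^ 2 * A ^ 2 := by ring
    _ ≤ (∑ x, p x ^ 2) ^ 2 * ((∑ y, q y ^ 2) ^ 2 * boxSum f) := by gcongr
    _ = _ := by ring

/-- `bilin_pow_four_le` after taking fourth roots; `ρ` stands for `boxSum f ^ (1/4)`. -/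
lemma bilin_le (f : X × Y → ℝ) {ρ : ℝ} (hρ : 0 ≤ ρ) (hf : boxSum f = ρ ^ 4)
    (p : X → ℝ) (q : Y → ℝ) :
    |∑ x, ∑ y, f (x, y) * (p x * q y)|
      ≤ ρ * (√(∑ x, p x ^ 2) * √(∑ y, q y ^ 2)) := by
  refine le_of_pow_le_pow_left₀ (n := 4) (by norm_num) (by positivity) ?_
  have hp : 0 ≤ ∑ x, p x ^ 2 := sum_nonneg fun x _ => sq_nonneg _
  have hq : 0 ≤ ∑ y, q y ^ 2 := sum_nonneg fun x _ => sq_nonneg _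
  have h := bilin_pow_four_le f p q
  rw [hf] at h
  calc |∑ x, ∑ y, f (x, y) * (p x * q y)| ^ 4
      = (∑ x, ∑ y, f (x, y) * (p x * q y)) ^ 4 := Even.pow_abs (by decide) _
    _ ≤ _ := h
    _ = ρ ^ 4 * ((√(∑ x, p x ^ 2) ^ 2) * (√(∑ y, q y ^ 2) ^ 2)) ^ 2 := by
        rw [Real.sq_sqrt hp, Real.sq_sqrt hq]
    _ = _ := by ring

/-- Restricting `p`, with `|p| ≤ 1`, to the classes of a colouring `u` loses no `ℓ²` mass:
the squared norms of the pieces add up to at most the number of points. -/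
lemma sum_color_sq_le {Z : Type*} [Fintype Z] (p : Z → ℝ) (hp : ∀ z, |p z| ≤ 1) (u : Z → ℕ)
    (N : ℕ) :
    ∑ c ∈ range N, ∑ z, (p z * if u z = c then 1 else 0) ^ 2 ≤ (Fintype.card Z : ℝ) := by
  rw [sum_comm]
  calc _ ≤ ∑ z : Z, (1 : ℝ) := by
        refine sum_le_sum fun z _ => ?_
        have h : ∀ c, (p z * if u z = c then 1 else 0) ^ 2 = if u z = c then p z ^ 2 else 0 := by
          intro c; split_ifs <;> simp
        simp only [h, sum_ite_eq]
        have := (sq_le_one_iff_abs_le_one (p z)).2 (hp z)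
        split_ifs <;> linarith
    _ = _ := by simp

/-- Correlation of `f` with a block-diagonal matrix whose blocks are rank-one and bounded. -/
lemma block_le (f : X × Y → ℝ) {ρ : ℝ} (hρ : 0 ≤ ρ) (hf : boxSum f = ρ ^ 4)
    (p : X → ℝ) (q : Y → ℝ) (hp : ∀ x, |p x| ≤ 1) (hq : ∀ y, |q y| ≤ 1)
    (u : X → ℕ) (v : Y → ℕ) (N : ℕ) (hu : ∀ x, u x < N) :
    |∑ x, ∑ y, f (x, y) * (p x * q y * if u x = v y then 1 else 0)|
      ≤ ρ * √((Fintype.card X : ℝ) * Fintype.card Y) := by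
  set P : ℕ → X → ℝ := fun c x => p x * if u x = c then 1 else 0 with hP
  set Q : ℕ → Y → ℝ := fun c y => q y * if v y = c then 1 else 0 with hQ
  have key : ∑ x, ∑ y, f (x, y) * (p x * q y * if u x = v y then 1 else 0)
      = ∑ c ∈ range N, ∑ x, ∑ y, f (x, y) * (P c x * Q c y) := by
    rw [sum_comm (s := range N)]
    refine Fintype.sum_congr _ _ fun x => ?_
    rw [sum_comm (s := range N)]
    refine Fintype.sum_congr _ _ fun y => ?_
    rw [← mul_sum]
    congr 1
    have h : ∀ c, P c x * Q c y = if u x = c then p x * Q c y else 0 := by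
      intro c
      simp only [hP]
      split_ifs <;> simp
    rw [sum_congr rfl fun c _ => h c, sum_ite_eq, if_pos (mem_range.2 (hu x)), mul_assoc]
    simp only [hQ, eq_comm (a := v y)]
  rw [key]
  calc _ ≤ ∑ c ∈ range N, |∑ x, ∑ y, f (x, y) * (P c x * Q c y)| := abs_sum_le_sum_abs _ _
    _ ≤ ∑ c ∈ range N, ρ * (√(∑ x, P c x ^ 2) * √(∑ y, Q c y ^ 2)) :=
        sum_le_sum fun c _ => bilin_le f hρ hf _ _
    _ = ρ * ∑ c ∈ range N, √(∑ x, P c x ^ 2) * √(∑ y, Q c y ^ 2) := by rw [mul_sum]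
    _ ≤ ρ * (√(∑ c ∈ range N, ∑ x, P c x ^ 2) * √(∑ c ∈ range N, ∑ y, Q c y ^ 2)) := by
        gcongr
        exact Real.sum_sqrt_mul_sqrt_le _ (fun c => sum_nonneg fun x _ => sq_nonneg _)
          (fun c => sum_nonneg fun x _ => sq_nonneg _)
    _ ≤ ρ * (√(Fintype.card X : ℝ) * √(Fintype.card Y : ℝ)) := by
        gcongr
        · exact sum_color_sq_le p hp u N
        · exact sum_color_sq_le q hq v N
    _ = _ := by rw [Real.sqrt_mul (by positivity)]

lemma lt_indicator_split (a b : ℕ) :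
    (if b < a then (1 : ℝ) else 0) = (if b / 2 < a / 2 then 1 else 0) +
      (if a % 2 = 1 then 1 else 0) * (if b % 2 = 0 then 1 else 0) *
        (if a / 2 = b / 2 then 1 else 0) := by
  split_ifs <;> first | (exfalso; omega) | norm_num

/-- Correlation of `f` with a "greater than" matrix on `m`-bit integers, by peeling off the
least significant bit. -/
lemma greater_than_le (f : X × Y → ℝ) {ρ : ℝ} (hρ : 0 ≤ ρ) (hf : boxSum f = ρ ^ 4) (m : ℕ) :
    ∀ (a : X → ℕ) (b : Y → ℕ), (∀ x, a x < 2 ^ m) →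
    |∑ x, ∑ y, f (x, y) * (if b y < a x then 1 else 0)|
      ≤ m * (ρ * √((Fintype.card X : ℝ) * Fintype.card Y)) := by
  induction m with
  | zero =>
    intro a b ha
    have h : ∀ x y, ¬ b y < a x := fun x y => by have := ha x; omega
    simp [h]
  | succ m ih =>
    intro a b ha
    have ha' : ∀ x, a x / 2 < 2 ^ m := fun x => by
      have := ha x; rw [pow_succ] at this; omega
    have h1 := ih (fun x => a x / 2) (fun y => b y / 2) ha'
    have h2 := block_le f hρ hf (fun x => if a x % 2 = 1 then 1 else 0)
      (fun y => if b y % 2 = 0 then 1 else 0)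
      (fun x => by split_ifs <;> simp) (fun y => by split_ifs <;> simp)
      (fun x => a x / 2) (fun y => b y / 2) _ ha'
    simp only [lt_indicator_split (a _) (b _), mul_add, sum_add_distrib]
    push_cast
    refine (abs_add_le _ _).trans ?_
    linarith

/-- The rank of `y` counts the `y'` with `β y' ≥ β y`; the rank of a real `a` is one more than the
number of `y'` for which `a + β y'` reaches the threshold. -/
lemma rank_lt_iff (β : Y → ℝ) (θ a : ℝ) (y : Y) :
    #{y' | β y ≤ β y'} < #{y' | θ ≤ a + β y'} + 1 ↔ θ ≤ a + β y := by
  constructor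
  · intro h
    by_contra! hlt
    have hss : ({y' | θ ≤ a + β y'} : Finset Y) ⊂ ({y' | β y ≤ β y'} : Finset Y) := by
      rw [ssubset_iff_of_subset]
      · exact ⟨y, by simp, by simpa using hlt⟩
      · intro z hz
        simp only [mem_filter, mem_univ, true_and] at hz ⊢
        linarith
    have := card_lt_card hss
    omega
  · intro h
    refine Nat.lt_succ_of_le (card_le_card fun z hz => ?_)
    simp only [mem_filter, mem_univ, true_and] at hz ⊢
    linarith

/-- Correlation of `f` with the indicator of a threshold condition `θ ≤ α x + β y`. -/
lemma threshold_le (f : X × Y → ℝ) {ρ : ℝ} (hρ : 0 ≤ ρ) (hf : boxSum f = ρ ^ 4) (m : ℕ)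
    (hm : Fintype.card Y + 1 < 2 ^ m) (α : X → ℝ) (β : Y → ℝ) (θ : ℝ) :
    |∑ x, ∑ y, f (x, y) * (if θ ≤ α x + β y then 1 else 0)|
      ≤ m * (ρ * √((Fintype.card X : ℝ) * Fintype.card Y)) := by
  have h := greater_than_le f hρ hf m (fun x => #{y' | θ ≤ α x + β y'} + 1)
    (fun y => #{y' | β y ≤ β y'}) (fun x => lt_of_le_of_lt
      (Nat.succ_le_succ (card_le_univ _)) hm)
  simpa only [rank_lt_iff] using h

/-- The result of summing the pointwise inequality `f · (2 · #votes - s - 1/2) ≥ 1/2` over all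
inputs and bounding the correlation of `f` with each voter; `#votes` is the number of satisfied
threshold conditions. -/
lemma card_mul_card_le (s : ℕ) (α : Fin s → X → ℝ) (β : Fin s → Y → ℝ) (θ : Fin s → ℝ)
    (f : X × Y → ℝ)
    (hfv : ∀ x y, f (x, y) = if s < 2 * #{i | θ i ≤ α i x + β i y} then 1 else -1)
    {ρ : ℝ} (hρ : 0 ≤ ρ) (hf : boxSum f = ρ ^ 4) (m : ℕ)
    (hm : Fintype.card Y + 1 < 2 ^ m) :
    (Fintype.card X : ℝ) * Fintype.card Y / 2
      ≤ (2 * s * m + s + 1 / 2) * (ρ * √((Fintype.card X : ℝ) * Fintype.card Y)) := by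
  set K := ρ * √((Fintype.card X : ℝ) * Fintype.card Y) with hK
  have hpt : ∀ x y, (1 / 2 : ℝ) ≤ 2 * ∑ i, f (x, y) * (if θ i ≤ α i x + β i y then 1 else 0)
      - (s + 1 / 2) * f (x, y) := by
    intro x y
    rw [← mul_sum, ← natCast_card_filter, hfv x y]
    split_ifs with h
    · have : (s : ℝ) + 1 ≤ 2 * (#{i | θ i ≤ α i x + β i y} : ℝ) := by exact_mod_cast h
      linarith
    · have : 2 * (#{i | θ i ≤ α i x + β i y} : ℝ) ≤ s := by exact_mod_cast not_lt.1 h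
      linarith
  have hsum : (Fintype.card X : ℝ) * Fintype.card Y / 2
      ≤ 2 * ∑ i, (∑ x, ∑ y, f (x, y) * (if θ i ≤ α i x + β i y then 1 else 0))
        - (s + 1 / 2) * ∑ x, ∑ y, f (x, y) := by
    have h := sum_le_sum fun x (_ : x ∈ (univ : Finset X)) =>
      sum_le_sum fun y (_ : y ∈ (univ : Finset Y)) => hpt x y
    simp only [sum_const, card_univ, nsmul_eq_mul, sum_sub_distrib, ← mul_sum] at h
    have hswap : ∑ i, (∑ x, ∑ y, f (x, y) * (if θ i ≤ α i x + β i y then (1 : ℝ) else 0))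
        = ∑ x, ∑ y, f (x, y) * ∑ i, (if θ i ≤ α i x + β i y then (1 : ℝ) else 0) := by
      rw [sum_comm]
      refine sum_congr rfl fun x _ => ?_
      rw [sum_comm]
      exact sum_congr rfl fun y _ => by rw [mul_sum]
    rw [hswap]
    linarith
  have hthr : ∑ i : Fin s, (∑ x, ∑ y, f (x, y) * (if θ i ≤ α i x + β i y then 1 else 0))
      ≤ s * (m * K) := by
    calc _ ≤ ∑ i : Fin s, (m * K) :=
          sum_le_sum fun i _ => (le_abs_self _).trans
            (threshold_le f hρ hf m hm (α i) (β i) (θ i))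
      _ = _ := by simp
  have hone : |∑ x, ∑ y, f (x, y)| ≤ K := by
    have h := block_le f hρ hf (fun _ => 1) (fun _ => 1) (by simp) (by simp)
      (fun _ => 0) (fun _ => 0) 1 (by simp)
    simpa only [mul_one, if_true] using h
  have hneg : -∑ x, ∑ y, f (x, y) ≤ K := (neg_le_abs _).trans hone
  have hs : (0 : ℝ) ≤ s + 1 / 2 := by positivity
  nlinarith [mul_le_mul_of_nonneg_left hneg hs]

end

/-- Every majority vote of `s` linear threshold functions on the `n` combined input
bits has 2-party norm at least `(n·s)^{-k}` for some universal constant `k > 0`. -/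
theorem stmt_10 :
    ∃ k : ℝ, 0 < k ∧
      ∀ n : ℕ, 2 ≤ n → ∀ s : ℕ, 1 ≤ s →
        ∀ (w : Fin s → Fin ((n + 1) / 2) → ℝ) (v : Fin s → Fin (n / 2) → ℝ)
          (θ : Fin s → ℝ),
          ((n : ℝ) * (s : ℝ)) ^ (-k) ≤ R2 (majThr n s w v θ) := by
  refine ⟨16, by norm_num, fun n hn s hs w v θ => ?_⟩
  set f := majThr n s w v θ with hfdef
  set ρ := √√(boxSum f) with hρdef
  have hρ : 0 ≤ ρ := Real.sqrt_nonneg _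
  have hf : boxSum f = ρ ^ 4 := by
    have : ρ ^ 4 = (ρ ^ 2) ^ 2 := by ring
    rw [this, hρdef, Real.sq_sqrt (Real.sqrt_nonneg _), Real.sq_sqrt (boxSum_nonneg f)]
  have hm : Fintype.card (Fin (n / 2) → Bool) + 1 < 2 ^ n := by
    have h1 : 2 ^ (n / 2) ≤ 2 ^ (n - 1) := Nat.pow_le_pow_right (by norm_num) (by omega)
    have h2 : 2 ^ n = 2 * 2 ^ (n - 1) := by
      rw [← pow_succ']; congr 1; omega
    have h3 : 2 ^ 1 ≤ 2 ^ (n - 1) := Nat.pow_le_pow_right (by norm_num) (by omega)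
    simp only [Fintype.card_fun, Fintype.card_bool, Fintype.card_fin]
    omega
  have key := card_mul_card_le s (fun i (x : Fin ((n + 1) / 2) → Bool) => ∑ j, w i j * b2r (x j))
    (fun i (y : Fin (n / 2) → Bool) => ∑ j, v i j * b2r (y j)) θ f
    (fun x y => by simp only [hfdef, majThr]) hρ hf n hm
  set D : ℝ := (Fintype.card (Fin ((n + 1) / 2) → Bool) : ℝ) *
    (Fintype.card (Fin (n / 2) → Bool) : ℝ) with hD
  have hDpos : 0 < D := by
    rw [hD]
    have h1 : 0 < Fintype.card (Fin ((n + 1) / 2) → Bool) := Fintype.card_pos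
    have h2 : 0 < Fintype.card (Fin (n / 2) → Bool) := Fintype.card_pos
    positivity
  have hn' : (2 : ℝ) ≤ n := by exact_mod_cast hn
  have hs' : (1 : ℝ) ≤ s := by exact_mod_cast hs
  set t : ℝ := (n : ℝ) * s with ht
  have ht2 : 2 ≤ t := by nlinarith
  have hst : 2 * (s : ℝ) ≤ t := by nlinarith
  have hsq : 0 < √D := Real.sqrt_pos.2 hDpos
  have hsqrt : √D ≤ 6 * t * ρ := by
    have h1 : √D * √D = D := Real.mul_self_sqrt hDpos.le
    have h2 : (2 * (s : ℝ) * n + s + 1 / 2) * (ρ * √D) ≤ 3 * t * (ρ * √D) :=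
      mul_le_mul_of_nonneg_right (by nlinarith) (by positivity)
    have h3 : √D * √D ≤ (6 * t * ρ) * √D := by nlinarith
    exact le_of_mul_le_mul_right h3 hsq
  have hD4 : D ^ 2 ≤ (6 * t) ^ 4 * boxSum f := by
    calc D ^ 2 = √D ^ 4 := by
          rw [show √D ^ 4 = (√D ^ 2) ^ 2 by ring, Real.sq_sqrt hDpos.le]
      _ ≤ (6 * t * ρ) ^ 4 := by gcongr
      _ = _ := by rw [hf]; ring
  -- `6 ≤ 2 ^ 3 ≤ t ^ 3` absorbs the constant into the exponent.
  have h6 : (6 * t) ^ 4 ≤ t ^ 16 := by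
    have h3 : (6 : ℝ) ≤ t ^ 3 := by
      have : (2 : ℝ) ^ 3 ≤ t ^ 3 := by gcongr
      linarith
    calc (6 * t) ^ 4 ≤ (t ^ 3 * t) ^ 4 := by gcongr
      _ = t ^ 16 := by ring
  have htpos : 0 < t ^ 16 := by positivity
  have hR : R2 f = boxSum f / D ^ 2 := by rw [hD, mul_pow]; rfl
  have hpow : t ^ (-16 : ℝ) = (t ^ 16)⁻¹ := by
    rw [Real.rpow_neg (by linarith)]
    norm_cast
  rw [hR, hpow, le_div_iff₀ (by positivity), inv_mul_le_iff₀ htpos]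
  exact hD4.trans (mul_le_mul_of_nonneg_right h6 (boxSum_nonneg f))
end

section
/- Let m ≥ 1 and define the inner product mod 2 function IP2 : 𝔽₂^m × 𝔽₂^m → {-1,1} by IP2(x,y) = (-1)^{Σ_{i=1}^m x_i y_i (mod 2)}. Then R₂(IP2) = 2^{-m}. -/
/-!
`IP2` is a bicharacter: it is symmetric and multiplicative in each argument. Hence the product of
its values at the four corners of the rectangle `{x, x'} × {y, y'}` is `IP2 (x + x', y + y')`, and
translation invariance of the sums over `x` and `y` reduces the claim to
`∑ z, ∑ w, IP2 (z, w) = 2 ^ m`. For `z ≠ 0` the character `IP2 (z, ·)` is nontrivial, so its sum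
vanishes (`sum_IP2`); only `z = 0` contributes, with the value `2 ^ m`.
-/


open Finset

/-- The `±1`-valued inner product mod 2 function on `𝔽₂^m × 𝔽₂^m`:
`IP2(x,y) = (-1)^{Σᵢ xᵢyᵢ mod 2}`. -/
def IP2 (m : ℕ) (p : (Fin m → ZMod 2) × (Fin m → ZMod 2)) : ℝ :=
  if (∑ i, p.1 i * p.2 i : ZMod 2) = 1 then -1 else 1

lemma IP2_comm {m : ℕ} (x y : Fin m → ZMod 2) : IP2 m (x, y) = IP2 m (y, x) := by
  simp only [IP2, mul_comm]

lemma IP2_add_right {m : ℕ} (x y y' : Fin m → ZMod 2) :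
    IP2 m (x, y + y') = IP2 m (x, y) * IP2 m (x, y') := by
  have key : ∀ a b : ZMod 2, (if a + b = 1 then (-1 : ℝ) else 1) =
      (if a = 1 then -1 else 1) * (if b = 1 then -1 else 1) := by
    intro a b
    have h2 : (1 + 1 : ZMod 2) ≠ 1 := by decide
    have h01 : ∀ c : ZMod 2, c = 0 ∨ c = 1 := by decide
    rcases h01 a with rfl | rfl <;> rcases h01 b with rfl | rfl <;> simp [h2]
  simp only [IP2, Pi.add_apply, mul_add, Finset.sum_add_distrib]
  exact key _ _

lemma IP2_add_left {m : ℕ} (x x' y : Fin m → ZMod 2) :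
    IP2 m (x + x', y) = IP2 m (x, y) * IP2 m (x', y) := by
  rw [IP2_comm, IP2_add_right, IP2_comm y, IP2_comm y]

/-- Orthogonality of characters: the sum of the character `IP2 (z, ·)` over `𝔽₂^m`. -/
lemma sum_IP2 {m : ℕ} (z : Fin m → ZMod 2) :
    ∑ y, IP2 m (z, y) = if z = 0 then (2 : ℝ) ^ m else 0 := by
  split_ifs with hz
  · subst hz
    simp [IP2]
  · obtain ⟨i, hi⟩ := Function.ne_iff.mp hz
    have h1 : z i = 1 := (by decide : ∀ c : ZMod 2, c ≠ 0 → c = 1) _ hi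
    have he : IP2 m (z, Pi.single i 1) = -1 := by
      simp [IP2, Pi.single_apply, h1]
    -- Translating by the `i`-th basis vector negates every term of the sum.
    have hs := Equiv.sum_comp (Equiv.addRight (Pi.single i (1 : ZMod 2))) (fun y => IP2 m (z, y))
    simp only [Equiv.coe_addRight, IP2_add_right, he, mul_neg, mul_one,
      Finset.sum_neg_distrib] at hs
    linarith

/-- The 2-party norm of the inner product mod 2 function equals `2^{-m}`. -/
theorem stmt_12 (m : ℕ) (hm : 1 ≤ m) : R2 (IP2 m) = ((2 : ℝ) ^ m)⁻¹ := by
  have hprod : ∀ x x' y y' : Fin m → ZMod 2,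
      IP2 m (x, y) * IP2 m (x, y') * IP2 m (x', y) * IP2 m (x', y') =
        IP2 m (x' + x, y' + y) := by
    intro x x' y y'
    rw [IP2_add_left, IP2_add_right, IP2_add_right]
    ring
  have hshift : ∀ (f : (Fin m → ZMod 2) → ℝ) (a : Fin m → ZMod 2),
      ∑ x, f (x + a) = ∑ x, f x := fun f a => Equiv.sum_comp (Equiv.addRight a) f
  have hcard : (Fintype.card (Fin m → ZMod 2) : ℝ) = 2 ^ m := by simp
  have hsum : ∑ x : Fin m → ZMod 2, ∑ x' : Fin m → ZMod 2, ∑ y : Fin m → ZMod 2,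
      ∑ y' : Fin m → ZMod 2, IP2 m (x, y) * IP2 m (x, y') * IP2 m (x', y) * IP2 m (x', y') =
        (2 : ℝ) ^ m * (2 ^ m * 2 ^ m) := by
    simp only [hprod]
    calc _ = ∑ x : Fin m → ZMod 2, ∑ x' : Fin m → ZMod 2, ∑ y : Fin m → ZMod 2,
          ∑ w, IP2 m (x' + x, w) :=
          Finset.sum_congr rfl fun x _ => Finset.sum_congr rfl fun x' _ =>
            Finset.sum_congr rfl fun y _ => hshift (fun w => IP2 m (x' + x, w)) y
      _ = ∑ x : Fin m → ZMod 2, ∑ z : Fin m → ZMod 2, ∑ y : Fin m → ZMod 2,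
          ∑ w, IP2 m (z, w) :=
          Finset.sum_congr rfl fun x _ =>
            hshift (fun z => ∑ y : Fin m → ZMod 2, ∑ w, IP2 m (z, w)) x
      _ = _ := by simp [sum_IP2]
  rw [R2, hsum, hcard]
  field_simp
end

section
/- Let m ≥ 1, let IP2 : 𝔽₂^m × 𝔽₂^m → {-1,1} be IP2(x,y) = (-1)^{Σ_{i=1}^m x_i y_i (mod 2)}, let c be a natural number, and let π : 𝔽₂^m × 𝔽₂^m → {-1,1} be constant on each rectangle of some partition of 𝔽₂^m × 𝔽₂^m into at most 2^c combinatorial rectangles. Then |E_{x,y}[IP2(x,y)·π(x,y)]| ≤ 2^c · 2^{-m/4}, where x and y are independent uniform samples. (This is the statable form of the fact that IP2 requires Ω(m) bits of 2-party communication to be computed with nonnegligible correlation.) -/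
/-!
The argument is Lindsey's lemma. The matrix `IP2(x,y)` is a Hadamard matrix of order `N = 2^m`: its
columns are pairwise orthogonal (`sum_IP2_mul_IP2`), because translating `x` by the basis vector
`eᵢ` with `yᵢ ≠ zᵢ` flips the sign of `IP2(x,y) IP2(x,z)`. Hence it multiplies Euclidean norms
by `√N` (`sum_sq_IP2`), and Cauchy–Schwarz gives `(∑ f(x) IP2(x,y) g(y))² ≤ N³` for all `f, g`
bounded by `1` (`lindsey`).

A function `π` constant on the rectangles `Aᵢ × Bᵢ` is `∑ᵢ fᵢ(x) gᵢ(y)` with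
`gᵢ` the indicator of `Bᵢ` and `fᵢ` that of `Aᵢ` times the value of `π` on the rectangle.
Summing over at most `2^c` rectangles and dividing by `N²` bounds the correlation by
`2^c · 2^(-m/2)`, which is stronger than required.
-/


open Finset

/-- The nontrivial additive character of `𝔽₂`, with values `±1`. -/
def sgn2 (a : ZMod 2) : ℝ := if a = 1 then -1 else 1

lemma sgn2_add (a b : ZMod 2) : sgn2 (a + b) = sgn2 a * sgn2 b := by
  have h : (1 : ZMod 2) + 1 = 0 := by decide
  have key : ∀ a : ZMod 2, a = 0 ∨ a = 1 := by decide
  rcases key a with rfl | rfl <;> rcases key b with rfl | rfl <;> simp [sgn2, h]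

lemma sgn2_mul_of_ne {a b : ZMod 2} (hab : a ≠ b) : sgn2 a * sgn2 b = -1 := by
  rw [← sgn2_add, (by decide +revert : a + b = 1)]
  simp [sgn2]

lemma IP2_mul_self (m : ℕ) (p : (Fin m → ZMod 2) × (Fin m → ZMod 2)) :
    IP2 m p * IP2 m p = 1 := by
  unfold IP2
  split_ifs <;> norm_num

lemma IP2_add_single (m : ℕ) (x y : Fin m → ZMod 2) (i : Fin m) :
    IP2 m (x + Pi.single i 1, y) = IP2 m (x, y) * sgn2 (y i) := by
  change sgn2 (∑ j, (x + Pi.single i 1 : Fin m → ZMod 2) j * y j) = sgn2 (∑ j, x j * y j) * sgn2 (y i)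
  rw [← sgn2_add]
  congr 1
  simp [add_mul, Finset.sum_add_distrib, Pi.single_apply]

/-- Orthogonality of the columns of the matrix `IP2`. -/
lemma sum_IP2_mul_IP2 (m : ℕ) (y z : Fin m → ZMod 2) :
    ∑ x, IP2 m (x, y) * IP2 m (x, z) = if y = z then (2 : ℝ) ^ m else 0 := by
  split_ifs with h
  · subst h
    simp [IP2_mul_self]
  · obtain ⟨i, hi⟩ := Function.ne_iff.mp h
    have h1 := Equiv.sum_comp (Equiv.addRight (Pi.single i 1 : Fin m → ZMod 2))
      (fun x => IP2 m (x, y) * IP2 m (x, z))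
    have h2 : ∀ x : Fin m → ZMod 2,
        IP2 m (x + Pi.single i 1, y) * IP2 m (x + Pi.single i 1, z)
          = -(IP2 m (x, y) * IP2 m (x, z)) := by
      intro x
      rw [IP2_add_single, IP2_add_single]
      linear_combination (IP2 m (x, y) * IP2 m (x, z)) * sgn2_mul_of_ne hi
    simp only [Equiv.coe_addRight, h2, Finset.sum_neg_distrib] at h1
    linarith

/-- Parseval: the matrix `IP2` scales squared Euclidean norms by `2^m`. -/
lemma sum_sq_IP2 (m : ℕ) (g : (Fin m → ZMod 2) → ℝ) :
    ∑ x, (∑ y, IP2 m (x, y) * g y) ^ 2 = 2 ^ m * ∑ y, g y ^ 2 := by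
  calc ∑ x, (∑ y, IP2 m (x, y) * g y) ^ 2
      = ∑ x, ∑ y, ∑ z, g y * g z * (IP2 m (x, y) * IP2 m (x, z)) := by
        refine Finset.sum_congr rfl fun x _ => ?_
        rw [sq, Finset.sum_mul_sum]
        refine Finset.sum_congr rfl fun y _ => Finset.sum_congr rfl fun z _ => by ring
    _ = ∑ y, ∑ z, g y * g z * ∑ x, IP2 m (x, y) * IP2 m (x, z) := by
        rw [Finset.sum_comm]
        refine Finset.sum_congr rfl fun y _ => ?_
        rw [Finset.sum_comm]
        simp only [Finset.mul_sum]
    _ = 2 ^ m * ∑ y, g y ^ 2 := by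
        simp only [sum_IP2_mul_IP2, mul_ite, mul_zero, Finset.sum_ite_eq, Finset.mem_univ, if_true,
          Finset.mul_sum]
        refine Finset.sum_congr rfl fun y _ => by ring

lemma sum_sq_le (m : ℕ) (f : (Fin m → ZMod 2) → ℝ) (hf : ∀ x, |f x| ≤ 1) :
    ∑ x, f x ^ 2 ≤ 2 ^ m := by
  calc ∑ x, f x ^ 2 ≤ ∑ _x : Fin m → ZMod 2, (1 : ℝ) :=
        Finset.sum_le_sum fun x _ => (sq_le_one_iff_abs_le_one _).mpr (hf x)
    _ = 2 ^ m := by simp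

/-- Lindsey's lemma, for weights bounded by `1` in place of indicators of sets. -/
lemma lindsey (m : ℕ) (f g : (Fin m → ZMod 2) → ℝ)
    (hf : ∀ x, |f x| ≤ 1) (hg : ∀ x, |g x| ≤ 1) :
    |∑ x, ∑ y, IP2 m (x, y) * (f x * g y)| ≤ (2 : ℝ) ^ (3 * (m : ℝ) / 2) := by
  have hN : ((2 : ℝ) ^ (3 * (m : ℝ) / 2)) ^ 2 = 2 ^ m * (2 ^ m * 2 ^ m) := by
    rw [← Real.rpow_natCast, ← Real.rpow_mul (by norm_num), ← pow_add, ← pow_add,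
      ← Real.rpow_natCast]
    congr 1
    push_cast
    ring
  refine abs_le_of_sq_le_sq ?_ (by positivity)
  rw [hN]
  calc (∑ x, ∑ y, IP2 m (x, y) * (f x * g y)) ^ 2
      = (∑ x, f x * ∑ y, IP2 m (x, y) * g y) ^ 2 := by
        congr 1
        refine Finset.sum_congr rfl fun x _ => ?_
        rw [Finset.mul_sum]
        exact Finset.sum_congr rfl fun y _ => by ring
    _ ≤ (∑ x, f x ^ 2) * ∑ x, (∑ y, IP2 m (x, y) * g y) ^ 2 :=
        Finset.sum_mul_sq_le_sq_mul_sq _ _ _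
    _ ≤ 2 ^ m * (2 ^ m * 2 ^ m) := by
        rw [sum_sq_IP2]
        have h1 := sum_sq_le m f hf
        have h2 := sum_sq_le m g hg
        gcongr

/-- A bounded function constant on the rectangles of a partition is a sum of at most `2^c`
products of functions of one variable bounded by `1`. -/
lemma ConstantOnRectPartition.exists_sum {X Y : Type*} {c : ℕ} {π : X × Y → ℝ}
    (hrect : ConstantOnRectPartition c π) (hπ : ∀ p, |π p| ≤ 1) :
    ∃ k : ℕ, k ≤ 2 ^ c ∧ ∃ (f : Fin k → X → ℝ) (g : Fin k → Y → ℝ),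
      (∀ i x, |f i x| ≤ 1) ∧ (∀ i y, |g i y| ≤ 1) ∧ ∀ x y, π (x, y) = ∑ i, f i x * g i y := by
  classical
  obtain ⟨k, hk, A, B, hpart, hconst⟩ := hrect
  -- The value of `π` on each rectangle; on an empty rectangle `0` serves.
  have hv : ∀ i, ∃ v : ℝ, |v| ≤ 1 ∧ ∀ p : X × Y, p.1 ∈ A i → p.2 ∈ B i → π p = v := by
    intro i
    by_cases h : ∃ q : X × Y, q.1 ∈ A i ∧ q.2 ∈ B i
    · obtain ⟨q, hqA, hqB⟩ := h
      exact ⟨π q, hπ q, fun p hpA hpB => hconst i p q hpA hpB hqA hqB⟩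
    · exact ⟨0, by simp, fun p hpA hpB => (h ⟨p, hpA, hpB⟩).elim⟩
  choose v hv1 hv using hv
  refine ⟨k, hk, fun i x => if x ∈ A i then v i else 0, fun i y => if y ∈ B i then 1 else 0,
    ?_, ?_, ?_⟩
  · intro i x
    dsimp only
    split_ifs
    · exact hv1 i
    · simp
  · intro i y
    dsimp only
    split_ifs <;> simp
  · intro x y
    obtain ⟨i, ⟨hA, hB⟩, huniq⟩ := hpart (x, y)
    rw [Finset.sum_eq_single i]
    · simp only [if_pos (show x ∈ A i from hA), if_pos (show y ∈ B i from hB), mul_one]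
      exact hv i (x, y) hA hB
    · intro j _ hj
      by_cases h1 : x ∈ A j
      · by_cases h2 : y ∈ B j
        · exact (hj (huniq j ⟨h1, h2⟩)).elim
        · simp [h2]
      · simp [h1]
    · simp

/-- Inner product mod 2 requires `Ω(m)` bits of 2-party communication to be computed
with nonnegligible correlation: any `±1`-valued `π` that is constant on each
rectangle of a partition into at most `2^c` combinatorial rectangles has correlation
at most `2^c · 2^{-m/4}` with `IP2`. -/
theorem stmt_13 (m : ℕ) (hm : 1 ≤ m) (c : ℕ)
    (π : (Fin m → ZMod 2) × (Fin m → ZMod 2) → ℝ)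
    (hπ : ∀ p, π p = 1 ∨ π p = -1)
    (hrect : ConstantOnRectPartition c π) :
    |(∑ x : Fin m → ZMod 2, ∑ y : Fin m → ZMod 2, IP2 m (x, y) * π (x, y)) /
        ((Fintype.card (Fin m → ZMod 2) : ℝ) * (Fintype.card (Fin m → ZMod 2) : ℝ))| ≤
      2 ^ c * (2 : ℝ) ^ (-(m : ℝ) / 4) := by
  have hπ1 : ∀ p, |π p| ≤ 1 := fun p => by rcases hπ p with h | h <;> simp [h]
  obtain ⟨k, hk, f, g, hf, hg, hsum⟩ := hrect.exists_sum hπ1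
  have hS : |∑ x, ∑ y, IP2 m (x, y) * π (x, y)| ≤ 2 ^ c * (2 : ℝ) ^ (3 * (m : ℝ) / 2) := by
    calc |∑ x, ∑ y, IP2 m (x, y) * π (x, y)|
        = |∑ i, ∑ x, ∑ y, IP2 m (x, y) * (f i x * g i y)| := by
          congr 1
          simp only [hsum, Finset.mul_sum]
          rw [Finset.sum_comm (s := (Finset.univ : Finset (Fin k)))]
          exact Finset.sum_congr rfl fun x _ => Finset.sum_comm
      _ ≤ ∑ i, |∑ x, ∑ y, IP2 m (x, y) * (f i x * g i y)| := Finset.abs_sum_le_sum_abs _ _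
      _ ≤ ∑ _i : Fin k, (2 : ℝ) ^ (3 * (m : ℝ) / 2) :=
          Finset.sum_le_sum fun i _ => lindsey m _ _ (hf i) (hg i)
      _ = k * (2 : ℝ) ^ (3 * (m : ℝ) / 2) := by simp
      _ ≤ 2 ^ c * (2 : ℝ) ^ (3 * (m : ℝ) / 2) := by
          gcongr
          exact_mod_cast hk
  have hcard : (Fintype.card (Fin m → ZMod 2) : ℝ) = (2 : ℝ) ^ (m : ℝ) := by simp
  rw [hcard, abs_div, abs_of_pos (by positivity : (0 : ℝ) < 2 ^ (m : ℝ) * 2 ^ (m : ℝ)),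
    div_le_iff₀ (by positivity), mul_assoc, ← Real.rpow_add (by norm_num),
    ← Real.rpow_add (by norm_num)]
  refine hS.trans ?_
  have hm0 : (0 : ℝ) ≤ m := Nat.cast_nonneg m
  gcongr
  · norm_num
  · linarith
end
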